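/- Let f : ℝ → ℝ be C^∞ on a neighborhood of a point α with f(α) = 0 and f′(α) ≠ 0, and set c₂ = f″(α)/(2 f′(α)), c₃ = f‴(α)/(6 f′(α)), c₄ = f⁗(α)/(24 f′(α)). Define y(x) = x − f(x)/f′(x) and z(x) = y(x) − ((2f(x) − f(y(x)))/(2f(x) − 5f(y(x))))·(f(y(x))/f′(x)). Then, as x → α, the divided difference f[x, z(x)] = (f(x) − f(z(x)))/(x − z(x)) satisfies f[x, z(x)] = f′(α)·[1 + c₂(x−α) + c₃(x−α)² + c₄(x−α)³ + O((x−α)⁴)]. -/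

import Mathlib

open Filter Topology Asymptotics

/-- The Newton iterate `y(x) = x − f(x)/f′(x)`. -/
noncomputable def newtonStep (f : ℝ → ℝ) (x : ℝ) : ℝ := x - f x / deriv f x

/-- The second step of Kung's fourth-order family with `β = −1/2`:
`z(x) = y − ((2f(x) − f(y))/(2f(x) − 5f(y)))·(f(y)/f′(x))` where `y = newtonStep f x`. -/
noncomputable def kungStep (f : ℝ → ℝ) (x : ℝ) : ℝ :=
  newtonStep f x -
    ((2 * f x - f (newtonStep f x)) / (2 * f x - 5 * f (newtonStep f x))) *
      (f (newtonStep f x) / deriv f x)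

/-- The first-order divided difference `f[u,v] = (f(u) − f(v))/(u − v)`. -/
noncomputable def divDiff (f : ℝ → ℝ) (u v : ℝ) : ℝ := (f u - f v) / (u - v)

/-- Boundedness along a filter. -/
def Bd (l : Filter ℝ) (g : ℝ → ℝ) : Prop := g =O[l] fun _ => (1 : ℝ)

theorem Bd.add {l : Filter ℝ} {a b : ℝ → ℝ} (ha : Bd l a) (hb : Bd l b) :
    Bd l (fun x => a x + b x) := IsBigO.add ha hb

theorem Bd.sub {l : Filter ℝ} {a b : ℝ → ℝ} (ha : Bd l a) (hb : Bd l b) :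
    Bd l (fun x => a x - b x) := IsBigO.sub ha hb

theorem Bd.mul {l : Filter ℝ} {a b : ℝ → ℝ} (ha : Bd l a) (hb : Bd l b) :
    Bd l (fun x => a x * b x) := by
  have := IsBigO.mul ha hb
  simpa [Bd] using this

theorem Bd.pow {l : Filter ℝ} {a : ℝ → ℝ} (ha : Bd l a) (n : ℕ) :
    Bd l (fun x => a x ^ n) := by
  have := IsBigO.pow ha n
  simpa [Bd] using this

theorem Bd.const {l : Filter ℝ} (c : ℝ) : Bd l (fun _ => c) :=
  isBigO_const_const c one_ne_zero l

theorem Bd.of_tendsto {l : Filter ℝ} {a : ℝ → ℝ} {c : ℝ} (h : Tendsto a l (𝓝 c)) : Bd l a :=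
  h.isBigO_one ℝ

theorem Bd.zero_mul {l : Filter ℝ} {e h : ℝ → ℝ} (he : Tendsto e l (𝓝 0)) (hh : Bd l h) :
    Tendsto (fun x => e x * h x) l (𝓝 0) := by
  have h1 : e =o[l] fun _ => (1 : ℝ) := (isLittleO_one_iff ℝ).2 he
  have h2 := h1.mul_isBigO hh
  exact (isLittleO_one_iff ℝ).1 (by simpa using h2)

theorem Bd.inv_aux {l : Filter ℝ} {e h : ℝ → ℝ} {a : ℝ} (ha : a ≠ 0)
    (he : Tendsto e l (𝓝 0)) (hh : Bd l h) :
    Bd l (fun x => (a + e x * h x)⁻¹) ∧ ∀ᶠ x in l, a + e x * h x ≠ 0 := by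
  have h1 : Tendsto (fun x => a + e x * h x) l (𝓝 a) := by
    simpa using (tendsto_const_nhds (x := a)).add (Bd.zero_mul he hh)
  exact ⟨Bd.of_tendsto (h1.inv₀ ha), h1.eventually_ne ha⟩

theorem taylor_bigO (f : ℝ → ℝ) (α : ℝ) (hf : ∃ s ∈ 𝓝 α, ContDiffOn ℝ (⊤ : ℕ∞) f s) (n : ℕ) :
    ∃ r : ℝ → ℝ, Bd (𝓝 α) r ∧ ∀ᶠ x in 𝓝 α,
      f x = (∑ k ∈ Finset.range (n + 1), iteratedDeriv k f α / (k.factorial : ℝ) * (x - α) ^ k)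
        + r x * (x - α) ^ (n + 1) := by
  obtain ⟨s, hs, hfs⟩ := hf
  obtain ⟨ε, hε, hb⟩ := Metric.mem_nhds_iff.1 hs
  have hαb : α ∈ Metric.ball α ε := Metric.mem_ball_self hε
  have hfb : ContDiffOn ℝ ((n + 1 : ℕ) : ℕ∞) f (Metric.ball α ε) :=
    (hfs.mono hb).of_le (by exact_mod_cast le_top)
  have h := (taylor_isLittleO (convex_ball α ε) hαb hfb).isBigO
  rw [Metric.isOpen_ball.nhdsWithin_eq hαb] at h
  obtain ⟨φ, hφ, hh⟩ := h.exists_eq_mul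
  have hφ' : Bd (𝓝 α) φ := (isBigO_one_iff ℝ).2 hφ
  refine ⟨fun x => φ x + iteratedDeriv (n + 1) f α / ((n + 1).factorial : ℝ),
    hφ'.add (Bd.const _), ?_⟩
  filter_upwards [hh] with x hx
  simp only [taylor_within_apply, Pi.mul_apply] at hx
  rw [Finset.sum_range_succ] at hx
  have hk : ∀ k, iteratedDerivWithin k f (Metric.ball α ε) α = iteratedDeriv k f α :=
    fun k => iteratedDerivWithin_of_isOpen Metric.isOpen_ball hαb
  simp only [hk, smul_eq_mul] at hx
  have hsum : ∑ k ∈ Finset.range (n + 1), iteratedDeriv k f α / (k.factorial : ℝ) * (x - α) ^ k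
      = ∑ k ∈ Finset.range (n + 1), ((k.factorial : ℝ)⁻¹ * (x - α) ^ k) * iteratedDeriv k f α :=
    Finset.sum_congr rfl fun k _ => by ring
  rw [hsum]
  linear_combination hx

theorem divDiff_x_z_expansion (f : ℝ → ℝ) (α : ℝ)
    (hf : ∃ s ∈ 𝓝 α, ContDiffOn ℝ (⊤ : ℕ∞) f s)
    (hroot : f α = 0) (hsimple : deriv f α ≠ 0)
    (c₂ c₃ c₄ : ℝ)
    (hc₂ : c₂ = iteratedDeriv 2 f α / (2 * deriv f α))
    (hc₃ : c₃ = iteratedDeriv 3 f α / (6 * deriv f α))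
    (hc₄ : c₄ = iteratedDeriv 4 f α / (24 * deriv f α)) :
    (fun x => divDiff f x (kungStep f x) -
        deriv f α * (1 + c₂ * (x - α) + c₃ * (x - α) ^ 2 + c₄ * (x - α) ^ 3))
      =O[𝓝[≠] α] fun x => (x - α) ^ 4 := by
  have hdf : ∃ s ∈ 𝓝 α, ContDiffOn ℝ (⊤ : ℕ∞) (deriv f) s := by
    obtain ⟨s, hs, hfs⟩ := hf
    refine ⟨interior s, isOpen_interior.mem_nhds (mem_interior_iff_mem_nhds.2 hs), ?_⟩
    exact (hfs.mono interior_subset).deriv_of_isOpen isOpen_interior (by exact_mod_cast le_top)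
  obtain ⟨r0, hr0, h0⟩ := taylor_bigO f α hf 4
  obtain ⟨r4, hr4, h4⟩ := taylor_bigO f α hf 1
  obtain ⟨r2, hr2, h2⟩ := taylor_bigO (deriv f) α hdf 1
  have hd2 : iteratedDeriv 1 (deriv f) α = iteratedDeriv 2 f α := by
    rw [iteratedDeriv_succ' (n := 1)]
  simp only [Finset.sum_range_succ, Finset.sum_range_zero, iteratedDeriv_zero, hroot, hd2,
    Nat.factorial] at h0 h4 h2
  simp only [iteratedDeriv_one] at h0 h4
  generalize hA : deriv f α = A at *
  have e2 : iteratedDeriv 2 f α = 2 * A * c₂ := by rw [hc₂]; field_simp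
  have e3 : iteratedDeriv 3 f α = 6 * A * c₃ := by rw [hc₃]; field_simp
  have e4 : iteratedDeriv 4 f α = 24 * A * c₄ := by rw [hc₄]; field_simp
  rw [e2, e3, e4] at h0
  rw [e2] at h2
  clear hc₂ hc₃ hc₄ e2 e3 e4 hd2
  set l := 𝓝[≠] α with hl
  have hle : l ≤ 𝓝 α := nhdsWithin_le_nhds
  have hne : ∀ᶠ x in l, x - α ≠ 0 := by
    filter_upwards [self_mem_nhdsWithin] with x hx using sub_ne_zero.2 hx
  obtain ⟨e, he⟩ : ∃ e : ℝ → ℝ, e = fun x => x - α := ⟨_, rfl⟩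
  have hex : ∀ x, x - α = e x := fun x => by rw [he]
  have het : Tendsto e l (𝓝 0) := by
    have : Tendsto e (𝓝 α) (𝓝 (α - α)) := by
      rw [he]; exact (continuous_id.sub continuous_const).tendsto α
    rw [sub_self] at this
    exact this.mono_left hle
  have heB : Bd l e := Bd.of_tendsto het
  have hr0 : Bd l r0 := hr0.mono hle
  have hr2 : Bd l r2 := hr2.mono hle
  have H0 := h0.filter_mono hle
  have H2 := h2.filter_mono hle
  -- derivative
  obtain ⟨hDB, hDne⟩ := Bd.inv_aux (h := fun x => 2 * A * c₂ + r2 x * e x) hsimple het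
    (by repeat' first | assumption | apply Bd.const | apply Bd.add | apply Bd.mul)
  obtain ⟨Di, hDi⟩ : ∃ Di : ℝ → ℝ, Di = fun x => (A + e x * (2 * A * c₂ + r2 x * e x))⁻¹ :=
    ⟨_, rfl⟩
  rw [← hDi] at hDB
  obtain ⟨p, hp⟩ : ∃ p : ℝ → ℝ, p = fun x =>
    A * c₂ + A * c₃ * e x + A * c₄ * e x ^ 2 + r0 x * e x ^ 3 := ⟨_, rfl⟩
  obtain ⟨r1, hr1⟩ : ∃ r1 : ℝ → ℝ, r1 = fun x =>
    A * c₃ + A * c₄ * e x + r0 x * e x ^ 2 := ⟨_, rfl⟩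
  have hpB : Bd l p := by
    rw [hp]
    repeat' first | assumption | apply Bd.const | apply Bd.add | apply Bd.mul | apply Bd.pow
  have hr1B : Bd l r1 := by
    rw [hr1]
    repeat' first | assumption | apply Bd.const | apply Bd.add | apply Bd.mul | apply Bd.pow
  -- Newton step
  obtain ⟨r3, hr3⟩ : ∃ r3 : ℝ → ℝ, r3 = fun x =>
    (r2 x - r1 x - c₂ * (2 * A * c₂ + r2 x * e x)) * Di x := ⟨_, rfl⟩
  have hr3B : Bd l r3 := by
    rw [hr3]
    repeat' first | assumption | apply Bd.const | apply Bd.sub | apply Bd.add | apply Bd.mul | apply Bd.pow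
  have hy : ∀ᶠ x in l, newtonStep f x = α + e x * (e x * (c₂ + r3 x * e x)) := by
    filter_upwards [H0, H2, hDne] with x h0 h2 hD
    have hx : x = α + e x := by rw [← hex]; ring
    have hDx : deriv f x = A + e x * (2 * A * c₂ + r2 x * e x) := by
      rw [h2, hex]; norm_num; ring
    have hu : f x = A * e x + A * c₂ * e x ^ 2 + r1 x * e x ^ 3 := by
      rw [h0, hex, hr1]; norm_num; ring
    rw [newtonStep, hDx, hu]
    have h : e x - (A * e x + A * c₂ * e x ^ 2 + r1 x * e x ^ 3) /
        (A + e x * (2 * A * c₂ + r2 x * e x)) = e x * (e x * (c₂ + r3 x * e x)) := by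
      rw [hr3, hDi]
      simp only
      generalize hDg : A + e x * (2 * A * c₂ + r2 x * e x) = D at *
      field_simp
      subst hDg
      ring
    linear_combination hx + h
  have hyt : Tendsto (newtonStep f) l (𝓝 α) := by
    have h1 : Tendsto (fun x => α + e x * (e x * (c₂ + r3 x * e x))) l (𝓝 (α + 0)) :=
      tendsto_const_nhds.add (Bd.zero_mul het (by
        repeat' first | assumption | apply Bd.const | apply Bd.add | apply Bd.mul))
    rw [add_zero] at h1
    exact h1.congr' (hy.mono fun x hx => hx.symm)
  obtain ⟨ry, hry⟩ : ∃ ry : ℝ → ℝ, ry = fun x => r4 (newtonStep f x) := ⟨_, rfl⟩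
  have hryB : Bd l ry := by
    rw [hry]; exact hr4.comp_tendsto hyt
  have H4y := hyt.eventually h4
  obtain ⟨r6, hr6⟩ : ∃ r6 : ℝ → ℝ, r6 = fun x => ry x * (c₂ + r3 x * e x) ^ 2 := ⟨_, rfl⟩
  have hr6B : Bd l r6 := by
    rw [hr6]
    repeat' first | assumption | apply Bd.const | apply Bd.sub | apply Bd.add | apply Bd.mul | apply Bd.pow
  obtain ⟨r5, hr5⟩ : ∃ r5 : ℝ → ℝ, r5 = fun x => A * r3 x + r6 x * e x := ⟨_, rfl⟩
  have hr5B : Bd l r5 := by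
    rw [hr5]
    repeat' first | assumption | apply Bd.const | apply Bd.sub | apply Bd.add | apply Bd.mul | apply Bd.pow
  obtain ⟨hwB, hwne⟩ := Bd.inv_aux (a := 2 * A)
    (h := fun x => 2 * p x - 5 * (A * c₂ + r5 x * e x)) (by simpa using hsimple) het
    (by repeat' first | assumption | apply Bd.const | apply Bd.sub | apply Bd.add | apply Bd.mul)
  obtain ⟨wi, hwi⟩ : ∃ wi : ℝ → ℝ, wi = fun x =>
    (2 * A + e x * (2 * p x - 5 * (A * c₂ + r5 x * e x)))⁻¹ := ⟨_, rfl⟩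
  rw [← hwi] at hwB
  obtain ⟨m, hm⟩ : ∃ m : ℝ → ℝ, m = fun x =>
    2 * A * c₂ * r3 x + r2 x * (c₂ + r3 x * e x) - r6 x := ⟨_, rfl⟩
  have hmB : Bd l m := by
    rw [hm]
    repeat' first | assumption | apply Bd.const | apply Bd.sub | apply Bd.add | apply Bd.mul | apply Bd.pow
  obtain ⟨r8, hr8⟩ : ∃ r8 : ℝ → ℝ, r8 = fun x =>
    (2 * A * m x + 2 * p x * (2 * A * c₂ ^ 2 + e x * m x)
      - 4 * (2 * A * c₂ * r5 x + r5 x ^ 2 * e x)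
      - 5 * (A * c₂ + r5 x * e x) * (2 * A * c₂ ^ 2 + e x * m x)) * Di x * wi x := ⟨_, rfl⟩
  have hr8B : Bd l r8 := by
    rw [hr8]
    repeat' first | assumption | apply Bd.const | apply Bd.sub | apply Bd.add | apply Bd.mul | apply Bd.pow
  have hz : ∀ᶠ x in l, kungStep f x = α + e x * (e x ^ 3 * r8 x) := by
    filter_upwards [H0, H2, hDne, hwne, hy, H4y, hne] with x h0 h2 hD hw hy hv hne
    rw [hex] at hne
    have hDx : deriv f x = A + e x * (2 * A * c₂ + r2 x * e x) := by
      rw [h2, hex]; norm_num; ring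
    have hu : f x = A * e x + p x * e x ^ 2 := by
      rw [h0, hex, hp]; norm_num; ring
    have hv1 : f (newtonStep f x) = e x ^ 2 * (A * c₂ + r5 x * e x) := by
      have hry' : r4 (newtonStep f x) = ry x := by rw [hry]
      rw [hv, hry', hy, hr5, hr6]; norm_num; ring
    have hm' : m x = 2 * A * c₂ * r3 x + r2 x * (c₂ + r3 x * e x) - r6 x := by rw [hm]
    have hr5' : r5 x = A * r3 x + r6 x * e x := by rw [hr5]
    have hden : 2 * f x - 5 * f (newtonStep f x)
        = e x * (2 * A + e x * (2 * p x - 5 * (A * c₂ + r5 x * e x))) := by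
      rw [hu, hv1]; ring
    rw [kungStep, hden, hDx, hv1, hu, hy, hr8, hDi, hwi]
    simp only
    generalize hDg : A + e x * (2 * A * c₂ + r2 x * e x) = D at *
    generalize hwg : 2 * A + e x * (2 * p x - 5 * (A * c₂ + r5 x * e x)) = w at *
    field_simp
    subst hDg hwg
    rw [hm', hr5']
    ring
  have hzt : Tendsto (kungStep f) l (𝓝 α) := by
    have h1 : Tendsto (fun x => α + e x * (e x ^ 3 * r8 x)) l (𝓝 (α + 0)) :=
      tendsto_const_nhds.add (Bd.zero_mul het (by
        repeat' first | assumption | apply Bd.const | apply Bd.add | apply Bd.mul | apply Bd.pow))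
    rw [add_zero] at h1
    exact h1.congr' (hz.mono fun x hx => hx.symm)
  obtain ⟨r9, hr9⟩ : ∃ r9 : ℝ → ℝ, r9 = fun x => r4 (kungStep f x) := ⟨_, rfl⟩
  have hr9B : Bd l r9 := by
    rw [hr9]; exact hr4.comp_tendsto hzt
  have H4z := hzt.eventually h4
  obtain ⟨hqB, hqne⟩ := Bd.inv_aux (a := 1)
    (h := fun x => (-1) * (r8 x * e x ^ 2)) one_ne_zero het
    (by repeat' first | assumption | apply Bd.const | apply Bd.mul | apply Bd.pow)
  obtain ⟨qi, hqi⟩ : ∃ qi : ℝ → ℝ, qi = fun x =>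
    (1 + e x * ((-1) * (r8 x * e x ^ 2)))⁻¹ := ⟨_, rfl⟩
  rw [← hqi] at hqB
  obtain ⟨R, hR⟩ : ∃ R : ℝ → ℝ, R = fun x =>
    (r0 x - r9 x * r8 x ^ 2 * e x ^ 3 + A * (c₂ + c₃ * e x + c₄ * e x ^ 2) * r8 x) * qi x :=
    ⟨_, rfl⟩
  have hRB : Bd l R := by
    rw [hR]
    repeat' first | assumption | apply Bd.const | apply Bd.sub | apply Bd.add | apply Bd.mul | apply Bd.pow
  refine isBigO_iff_exists_eq_mul.2 ⟨R, (isBigO_one_iff ℝ).1 hRB, ?_⟩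
  filter_upwards [H0, hz, H4z, hqne, hne] with x h0 hz hv hq hne
  rw [Pi.mul_apply]
  simp only [hex] at hne ⊢
  have hx : x = α + e x := by rw [← hex]; ring
  have hu : f x = A * (e x + c₂ * e x ^ 2 + c₃ * e x ^ 3 + c₄ * e x ^ 4) + r0 x * e x ^ 5 := by
    rw [h0, hex]; norm_num; ring
  have hr9' : r4 (kungStep f x) = r9 x := by rw [hr9]
  have hv1 : f (kungStep f x) = A * (e x ^ 4 * r8 x) + r9 x * (e x ^ 4 * r8 x) ^ 2 := by
    rw [hv, hr9', hz]; norm_num; ring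
  have hden : x - kungStep f x = e x * (1 + e x * ((-1) * (r8 x * e x ^ 2))) := by
    rw [hz]; nth_rewrite 1 [hx]; ring
  rw [divDiff, hden, hu, hv1, hR, hqi]
  simp only
  generalize hqg : 1 + e x * ((-1) * (r8 x * e x ^ 2)) = q at *
  field_simp
  subst hqg
  ring
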